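/- Let k, μ, s ∈ ℂ with μ + s ≠ 0, s ∉ ℤ, and 2−s not a nonpositive integer. Define y₄(x) = (x(x−1)/(μ+s))·((1−s)/x − k/(1−x) + ((k−s+1)(1−μ−s)/(2−s))·F(k−s+2, 2−μ−s, 3−s, x)/F(k−s+1, 1−μ−s, 2−s, x)). Let U ⊆ ℂ be an open subset of the unit disc {|x| < 1} on which x ≠ 0, x ≠ 1, F(k−s+1, 1−μ−s, 2−s, x) ≠ 0, and y₄(x) ∉ {0, 1, x}. Then y₄ solves P_VI((μ+s)²/2, −k²/2, (μ+1)²/2, (1−(k−s)²)/2) on U. -/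

import Mathlib

/-- `y` solves the Painlevé VI equation with parameters `(α, β, γ, δ)` on `U`:
`y` is twice differentiable on `U`, and at every `x ∈ U` we have `x ≠ 0`, `x ≠ 1`,
`y x ∉ {0, 1, x}` and the Painlevé VI equation holds. -/
def SolvesPVI (α β γ δ : ℂ) (U : Set ℂ) (y : ℂ → ℂ) : Prop :=
  (∀ x ∈ U, DifferentiableAt ℂ y x) ∧
  (∀ x ∈ U, DifferentiableAt ℂ (deriv y) x) ∧
  ∀ x ∈ U, x ≠ 0 ∧ x ≠ 1 ∧ y x ≠ 0 ∧ y x ≠ 1 ∧ y x ≠ x ∧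
    deriv (deriv y) x =
      (1 / 2) * (1 / y x + 1 / (y x - 1) + 1 / (y x - x)) * (deriv y x) ^ 2
        - (1 / x + 1 / (x - 1) + 1 / (y x - x)) * deriv y x
        + (y x * (y x - 1) * (y x - x) / (x ^ 2 * (x - 1) ^ 2)) *
            (α + β * x / (y x) ^ 2 + γ * (x - 1) / (y x - 1) ^ 2
              + δ * x * (x - 1) / (y x - x) ^ 2)

/-- The Gauss hypergeometric series `F(a, b, c, x) = Σ (a)ₙ(b)ₙ/(c)ₙ · xⁿ/n!`,
where `(a)ₙ` is the ascending Pochhammer symbol. -/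
noncomputable def hypF (a b c x : ℂ) : ℂ :=
  ∑' n : ℕ,
    ((ascPochhammer ℂ n).eval a * (ascPochhammer ℂ n).eval b / (ascPochhammer ℂ n).eval c)
      * x ^ n / (n.factorial : ℂ)

/-- The solution `y₄(k, μ, s)`, built from the second solution of the
hypergeometric equation. -/
noncomputable def y4 (k μ s : ℂ) : ℂ → ℂ := fun x =>
  (x * (x - 1) / (μ + s)) *
    ((1 - s) / x - k / (1 - x)
      + ((k - s + 1) * (1 - μ - s) / (2 - s))
          * hypF (k - s + 2) (2 - μ - s) (3 - s) x
          / hypF (k - s + 1) (1 - μ - s) (2 - s) x)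


/-- Coefficients of the Gauss hypergeometric series. -/
noncomputable def hypCoef (a b c : ℂ) (n : ℕ) : ℂ :=
  (ascPochhammer ℂ n).eval a * (ascPochhammer ℂ n).eval b / (ascPochhammer ℂ n).eval c
    / (n.factorial : ℂ)

theorem hypF_eq_ordinary (a b c : ℂ) :
    hypF a b c = (ordinaryHypergeometricSeries ℂ a b c).sum := by
  funext x
  rw [ordinaryHypergeometric_sum_eq, hypF]
  refine tsum_congr fun n => ?_
  simp only [smul_eq_mul]
  ring

theorem one_le_radius (a b c : ℂ) : 1 ≤ (ordinaryHypergeometricSeries ℂ a b c).radius := by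
  by_cases h : ∀ kn : ℕ, (kn : ℂ) ≠ -a ∧ (kn : ℂ) ≠ -b ∧ (kn : ℂ) ≠ -c
  · rw [ordinaryHypergeometricSeries_radius_eq_one _ _ _ _ h]
  · push Not at h
    obtain ⟨n, hn⟩ := h
    by_cases ha : (n : ℂ) = -a
    · obtain rfl : a = -(n : ℂ) := by rw [ha]; ring
      rw [ordinaryHypergeometric_radius_top_of_neg_nat₁]; exact le_top
    by_cases hb : (n : ℂ) = -b
    · obtain rfl : b = -(n : ℂ) := by rw [hb]; ring
      rw [ordinaryHypergeometric_radius_top_of_neg_nat₂]; exact le_top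
    have hc := hn ha hb
    obtain rfl : c = -(n : ℂ) := by rw [hc]; ring
    rw [ordinaryHypergeometric_radius_top_of_neg_nat₃]; exact le_top

theorem hypF_hasFPowerSeries (a b c : ℂ) :
    HasFPowerSeriesOnBall (hypF a b c) (ordinaryHypergeometricSeries ℂ a b c) 0 1 := by
  rw [hypF_eq_ordinary]
  exact ((ordinaryHypergeometricSeries ℂ a b c).hasFPowerSeriesOnBall
    (lt_of_lt_of_le one_pos (one_le_radius a b c))).mono one_pos (one_le_radius a b c)

theorem series_coeff (a b c : ℂ) (n : ℕ) :
    (ordinaryHypergeometricSeries ℂ a b c).coeff n = hypCoef a b c n := by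
  rw [ordinaryHypergeometricSeries, FormalMultilinearSeries.coeff_ofScalars,
    ordinaryHypergeometricCoefficient, hypCoef]
  ring

theorem mem_eball {x : ℂ} (hx : x ∈ Metric.ball (0 : ℂ) 1) : x ∈ Metric.eball (0 : ℂ) 1 := by
  rw [← ENNReal.ofReal_one, Metric.eball_ofReal]; exact hx

theorem hasSum_of_eq {f g : ℕ → ℂ} {S : ℂ} (h : HasSum f S) (e : ∀ n, g n = f n) :
    HasSum g S := by
  rwa [show g = f from funext e]

theorem hypF_hasSum (a b c : ℂ) {x : ℂ} (hx : x ∈ Metric.ball (0 : ℂ) 1) :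
    HasSum (fun n : ℕ => hypCoef a b c n * x ^ n) (hypF a b c x) := by
  have h := (hypF_hasFPowerSeries a b c).hasSum (mem_eball hx)
  rw [zero_add] at h
  refine hasSum_of_eq h fun n => ?_
  rw [FormalMultilinearSeries.apply_eq_pow_smul_coeff, series_coeff, smul_eq_mul, mul_comm]

theorem hypF_deriv_hasSum (a b c : ℂ) {x : ℂ} (hx : x ∈ Metric.ball (0 : ℂ) 1) :
    HasSum (fun n : ℕ => ((n : ℂ) + 1) * hypCoef a b c (n + 1) * x ^ n)
      (deriv (hypF a b c) x) := by
  have h := (hypF_hasFPowerSeries a b c).fderiv.hasSum (mem_eball hx)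
  have h2 := h.mapL (ContinuousLinearMap.apply ℂ ℂ (1 : ℂ))
  rw [zero_add] at h2
  refine hasSum_of_eq h2 fun n => ?_
  have := (ordinaryHypergeometricSeries ℂ a b c).derivSeries_coeff_one n
  rw [series_coeff] at this
  rw [FormalMultilinearSeries.apply_eq_pow_smul_coeff]
  simp [this]
  ring

theorem hypCoef_succ (a b c : ℂ) (n : ℕ) :
    ((n : ℂ) + 1) * hypCoef a b c (n + 1) = a * b / c * hypCoef (a + 1) (b + 1) (c + 1) n := by
  have h : ∀ z : ℂ, (ascPochhammer ℂ (n + 1)).eval z = z * (ascPochhammer ℂ n).eval (z + 1) := by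
    intro z
    simp [ascPochhammer_succ_left]
  have hn : ((n : ℂ) + 1) ≠ 0 := by exact_mod_cast Nat.succ_ne_zero n
  rw [hypCoef, hypCoef, h, h, h, Nat.factorial_succ]
  push_cast
  simp only [div_eq_mul_inv, mul_inv]
  field_simp

theorem hypCoef_rec (a b c : ℂ) (hc : ∀ m : ℕ, c ≠ -(m : ℂ)) (n : ℕ) :
    ((n : ℂ) + 1) * (c + n) * hypCoef a b c (n + 1) = (a + n) * (b + n) * hypCoef a b c n := by
  have h : ∀ z : ℂ, (ascPochhammer ℂ (n + 1)).eval z = (ascPochhammer ℂ n).eval z * (z + n) := by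
    intro z
    simp [ascPochhammer_succ_right]
  have hn : ((n : ℂ) + 1) ≠ 0 := by exact_mod_cast Nat.succ_ne_zero n
  have hcn : c + n ≠ 0 := fun h => hc n (eq_neg_of_add_eq_zero_left h)
  rw [hypCoef, hypCoef, h, h, h, Nat.factorial_succ]
  push_cast
  simp only [div_eq_mul_inv, mul_inv]
  field_simp

theorem hypF_hasDerivAt (a b c : ℂ) {x : ℂ} (hx : x ∈ Metric.ball (0 : ℂ) 1) :
    HasDerivAt (hypF a b c) (a * b / c * hypF (a + 1) (b + 1) (c + 1) x) x := by
  have hd : DifferentiableAt ℂ (hypF a b c) x :=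
    ((hypF_hasFPowerSeries a b c).analyticAt_of_mem (mem_eball hx)).differentiableAt
  have h1 := hypF_deriv_hasSum a b c hx
  have h2 := (hypF_hasSum (a + 1) (b + 1) (c + 1) hx).mul_left (a * b / c)
  have : deriv (hypF a b c) x = a * b / c * hypF (a + 1) (b + 1) (c + 1) x := by
    refine h1.unique ?_
    refine hasSum_of_eq (h2) fun n => ?_
    rw [hypCoef_succ]; ring
  rw [← this]
  exact hd.hasDerivAt

theorem hasSum_shift {f : ℕ → ℂ} {S : ℂ} (h0 : f 0 = 0) (h : HasSum (fun n => f (n + 1)) S) :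
    HasSum f S := by
  have := (hasSum_nat_add_iff (f := f) 1).1 h
  simpa [h0] using this

/-- Gauss' hypergeometric equation, with derivatives written as shifted series. -/
theorem hypF_ode (a b c : ℂ) (hc : ∀ m : ℕ, c ≠ -(m : ℂ)) {x : ℂ}
    (hx : x ∈ Metric.ball (0 : ℂ) 1) :
    x * (1 - x) * ((a * b / c) * ((a + 1) * (b + 1) / (c + 1)
        * hypF (a + 1 + 1) (b + 1 + 1) (c + 1 + 1) x))
      + (c - (a + b + 1) * x) * (a * b / c * hypF (a + 1) (b + 1) (c + 1) x)
      - a * b * hypF a b c x = 0 := by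
  have H0 := hypF_hasSum a b c hx
  have H1 := hypF_deriv_hasSum a b c hx
  rw [(hypF_hasDerivAt a b c hx).deriv] at H1
  have H2 := (hypF_deriv_hasSum (a + 1) (b + 1) (c + 1) hx).mul_left (a * b / c)
  rw [(hypF_hasDerivAt (a + 1) (b + 1) (c + 1) hx).deriv] at H2
  set F0 := hypF a b c x
  set D1 := a * b / c * hypF (a + 1) (b + 1) (c + 1) x
  set D2 := (a * b / c) * ((a + 1) * (b + 1) / (c + 1)
        * hypF (a + 1 + 1) (b + 1 + 1) (c + 1 + 1) x)
  have H2' : HasSum (fun n : ℕ => ((n : ℂ) + 1) * ((n : ℂ) + 2) * hypCoef a b c (n + 2) * x ^ n)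
      D2 := by
    refine hasSum_of_eq (H2) fun n => ?_
    have := hypCoef_succ a b c (n + 1)
    push_cast at this
    linear_combination (n + 1) * x ^ n * this
  have A1 : HasSum (fun n : ℕ => (n : ℂ) * hypCoef a b c n * x ^ n) (x * D1) := by
    refine hasSum_shift (by simp) ?_
    refine hasSum_of_eq (H1.mul_left x) fun n => ?_
    push_cast; ring
  have A2 : HasSum (fun n : ℕ => (n : ℂ) * ((n : ℂ) + 1) * hypCoef a b c (n + 1) * x ^ n)
      (x * D2) := by
    refine hasSum_shift (by simp) ?_
    refine hasSum_of_eq (H2'.mul_left x) fun n => ?_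
    push_cast; ring
  have A3 : HasSum (fun n : ℕ => (n : ℂ) * ((n : ℂ) - 1) * hypCoef a b c n * x ^ n)
      (x * (x * D2)) := by
    refine hasSum_shift (by simp) ?_
    refine hasSum_of_eq (A2.mul_left x) fun n => ?_
    push_cast; ring
  have T := (((A2.sub A3).add (H1.mul_left c)).sub (A1.mul_left (a + b + 1))).sub
    (H0.mul_left (a * b))
  have Z := HasSum.unique T (a₂ := 0) (by
    refine hasSum_of_eq (hasSum_zero) fun n => ?_
    linear_combination x ^ n * hypCoef_rec a b c hc n)
  linear_combination Z

theorem painleve_algebra (k μ s x Y y1 : ℂ) (hx0 : x ≠ 0) (hx1 : x - 1 ≠ 0) (hY0 : Y ≠ 0)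
    (hY1 : Y - 1 ≠ 0) (hYx : Y - x ≠ 0)
    (h1 : y1 = (-(μ + s) * Y ^ 2 + ((k + μ + 1) * x + s - 1) * Y - k * x) / (x * (x - 1))) :
    ((-(μ + s) * (2 * Y * y1) + ((k + μ + 1) * Y + ((k + μ + 1) * x + s - 1) * y1) - k)
        * (x * (x - 1)) -
      (-(μ + s) * Y ^ 2 + ((k + μ + 1) * x + s - 1) * Y - k * x) * (2 * x - 1))
        / (x * (x - 1)) ^ 2 =
      (1 / 2) * (1 / Y + 1 / (Y - 1) + 1 / (Y - x)) * y1 ^ 2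
        - (1 / x + 1 / (x - 1) + 1 / (Y - x)) * y1
        + (Y * (Y - 1) * (Y - x) / (x ^ 2 * (x - 1) ^ 2)) *
            ((μ + s) ^ 2 / 2 + -k ^ 2 / 2 * x / Y ^ 2 + (μ + 1) ^ 2 / 2 * (x - 1) / (Y - 1) ^ 2
              + (1 - (k - s) ^ 2) / 2 * x * (x - 1) / (Y - x) ^ 2) := by
  subst h1
  field_simp
  ring

theorem y4_hasDerivAt (k μ s : ℂ) (hμs : μ + s ≠ 0) (h2s : ∀ m : ℕ, 2 - s ≠ -(m : ℂ))
    {x : ℂ} (hx : x ∈ Metric.ball (0 : ℂ) 1) (hx0 : x ≠ 0) (hx1 : x ≠ 1)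
    (hF : hypF (k - s + 1) (1 - μ - s) (2 - s) x ≠ 0) :
    HasDerivAt (y4 k μ s)
      ((-(μ + s) * y4 k μ s x ^ 2 + ((k + μ + 1) * x + s - 1) * y4 k μ s x - k * x)
        / (x * (x - 1))) x := by
  have hd0 := hypF_hasDerivAt (k - s + 1) (1 - μ - s) (2 - s) hx
  have hd1 := hypF_hasDerivAt (k - s + 1 + 1) (1 - μ - s + 1) (2 - s + 1) hx
  have ode := hypF_ode (k - s + 1) (1 - μ - s) (2 - s) h2s hx
  have e1 : k - s + 2 = k - s + 1 + 1 := by ring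
  have e2 : 2 - μ - s = 1 - μ - s + 1 := by ring
  have e3 : 3 - s = 2 - s + 1 := by ring
  have hc : 2 - s ≠ 0 := by simpa using h2s 0
  have hc1 : 2 - s + 1 ≠ 0 := fun h => h2s 1 (by push_cast; linear_combination h)
  have hx1' : x - 1 ≠ 0 := sub_ne_zero.2 hx1
  have hx1'' : 1 - x ≠ 0 := sub_ne_zero.2 (Ne.symm hx1)
  have hid := hasDerivAt_id' x
  have hq := (hd1.const_mul ((k - s + 1) * (1 - μ - s) / (2 - s))).div hd0 hF
  have hp := ((((hasDerivAt_const x (1 - s)).div hid hx0).sub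
    ((hasDerivAt_const x k).div (hid.const_sub 1) hx1'')).add hq)
  have hy := ((hid.mul (hid.sub_const 1)).div_const (μ + s)).mul hp
  unfold y4
  rw [e1, e2, e3]
  refine hy.congr_deriv ?_
  simp only [Pi.add_apply, Pi.sub_apply, Pi.mul_apply, Pi.div_apply]
  set F0 := hypF (k - s + 1) (1 - μ - s) (2 - s) x
  set P := (k - s + 1) * (1 - μ - s) / (2 - s) *
    hypF (k - s + 1 + 1) (1 - μ - s + 1) (2 - s + 1) x
  set Q := (k - s + 1) * (1 - μ - s) / (2 - s) *
    ((k - s + 1 + 1) * (1 - μ - s + 1) / (2 - s + 1) *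
      hypF (k - s + 1 + 1 + 1) (1 - μ - s + 1 + 1) (2 - s + 1 + 1) x)
  clear_value P Q F0
  have hQ : Q = ((k - s + 1) * (1 - μ - s) * F0
      - (2 - s - (k - s + 1 + (1 - μ - s) + 1) * x) * P) / (x * (1 - x)) := by
    rw [eq_div_iff (mul_ne_zero hx0 hx1'')]
    linear_combination ode
  rw [hQ, show 1 - x = -(x - 1) by ring]
  field_simp
  ring

/-- **Case 2** `a = -(μ+s)` for the second hypergeometric solution: `y₄` solves
`P_VI((μ+s)²/2, -k²/2, (μ+1)²/2, (1-(k-s)²)/2)`. -/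
theorem y4_solves_painleveVI (k μ s : ℂ) (hμs : μ + s ≠ 0)
    (hsZ : ∀ m : ℤ, s ≠ (m : ℂ)) (h2s : ∀ m : ℕ, 2 - s ≠ -(m : ℂ))
    (U : Set ℂ) (hU : IsOpen U) (hUball : U ⊆ Metric.ball (0 : ℂ) 1)
    (hreg : ∀ x ∈ U, x ≠ 0 ∧ x ≠ 1 ∧ hypF (k - s + 1) (1 - μ - s) (2 - s) x ≠ 0 ∧
      y4 k μ s x ≠ 0 ∧ y4 k μ s x ≠ 1 ∧ y4 k μ s x ≠ x) :
    SolvesPVI ((μ + s) ^ 2 / 2) (-k ^ 2 / 2) ((μ + 1) ^ 2 / 2)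
      ((1 - (k - s) ^ 2) / 2) U (y4 k μ s) := by
  have hd : ∀ x ∈ U, HasDerivAt (y4 k μ s)
      ((-(μ + s) * y4 k μ s x ^ 2 + ((k + μ + 1) * x + s - 1) * y4 k μ s x - k * x)
        / (x * (x - 1))) x := fun x hx =>
    y4_hasDerivAt k μ s hμs h2s (hUball hx) (hreg x hx).1 (hreg x hx).2.1 (hreg x hx).2.2.1
  have hd2 : ∀ x ∈ U, HasDerivAt (deriv (y4 k μ s))
      (((-(μ + s) * (2 * y4 k μ s x * deriv (y4 k μ s) x) + ((k + μ + 1) * y4 k μ s x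
          + ((k + μ + 1) * x + s - 1) * deriv (y4 k μ s) x) - k) * (x * (x - 1)) -
      (-(μ + s) * y4 k μ s x ^ 2 + ((k + μ + 1) * x + s - 1) * y4 k μ s x - k * x) * (2 * x - 1))
        / (x * (x - 1)) ^ 2) x := by
    intro x hx
    obtain ⟨hx0, hx1, -⟩ := hreg x hx
    have hy := (hd x hx).differentiableAt.hasDerivAt
    have hid := hasDerivAt_id' x
    have hden : x * (x - 1) ≠ 0 := mul_ne_zero hx0 (sub_ne_zero.2 hx1)
    have hnum := (((hy.pow 2).const_mul (-(μ + s))).add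
      ((((hid.const_mul (k + μ + 1)).add_const s).sub_const 1).mul hy)).sub (hid.const_mul k)
    have hq := hnum.div (hid.mul (hid.sub_const 1)) hden
    have hev : deriv (y4 k μ s) =ᶠ[nhds x] fun x =>
        (-(μ + s) * y4 k μ s x ^ 2 + ((k + μ + 1) * x + s - 1) * y4 k μ s x - k * x)
        / (x * (x - 1)) :=
      Filter.eventuallyEq_of_mem (hU.mem_nhds hx) fun z hz => (hd z hz).deriv
    refine HasDerivAt.congr_of_eventuallyEq ?_ hev
    refine hq.congr_deriv ?_
    simp only [Pi.add_apply, Pi.sub_apply, Pi.mul_apply, Pi.div_apply, Pi.pow_apply]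
    congr 1
    push_cast
    ring
  refine ⟨fun x hx => (hd x hx).differentiableAt, fun x hx => (hd2 x hx).differentiableAt, ?_⟩
  intro x hx
  obtain ⟨hx0, hx1, -, hy0, hy1, hyx⟩ := hreg x hx
  refine ⟨hx0, hx1, hy0, hy1, hyx, ?_⟩
  rw [(hd2 x hx).deriv]
  exact painleve_algebra k μ s x _ _ hx0 (sub_ne_zero.2 hx1) hy0 (sub_ne_zero.2 hy1)
    (sub_ne_zero.2 hyx) (hd x hx).deriv
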